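/- Let (X,d) be a metric space, M a nonempty proper closed subset of X, and F : X∖M → (0,∞) a 1-Lipschitz function. Then the metric j(x,y) = (1/2)·log((1 + d(x,y)/F(x))·(1 + d(x,y)/F(y))) on X∖M is Gromov hyperbolic with Gromov constant δ ≤ (1/4)·log 24; that is, for all x,y,z,w ∈ X∖M, j(x,z) + j(y,w) ≤ max{ j(x,w) + j(y,z), j(x,y) + j(z,w) } + (1/2)·log 24. -/

import Mathlib

open Real Filter

/-- Generalized Gehring–Osgood function. -/
noncomputable def jGO {X : Type*} [MetricSpace X] (F : X → ℝ) (x y : X) : ℝ :=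
  (1 / 2) * Real.log ((1 + dist x y / F x) * (1 + dist x y / F y))

/-!
Clearing denominators, `2 j(x, y) = log P(x, y) - log F(x) - log F(y)` with
`P(x, y) = (F(x) + d(x, y)) (F(y) + d(x, y))`. The four-point inequality is insensitive to the
terms in `F`, since each of the three sums in it involves every point exactly once. For `log P` it
follows from the approximate ultrametric inequality `P(x, z) ≤ 9/2 max {P(x, y), P(y, z)}`, applied
to both diagonals `xz`, `yw` through the one of the sides `xy`, `yz`, `zw`, `wx` with the least `P`.
This gives `δ ≤ (1/2) log (9/2) = (1/4) log (81/4)`.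
-/

section ApproxUltrametric

variable {α G : Type*} [AddCommMonoid G] [LinearOrder G] [IsOrderedAddMonoid G]
  {f : α → α → G} {c : G}

theorem add_le_add_of_approx_ultrametric (hsymm : ∀ x y, f x y = f y x)
    (hultra : ∀ x y z, f x z ≤ max (f x y) (f y z) + c) {x y z w : α}
    (hyz : f x y ≤ f y z) (hxw : f x y ≤ f x w) :
    f x z + f y w ≤ f x w + f y z + (c + c) := by
  have hxz : f x z ≤ f y z + c := by simpa only [max_eq_right hyz] using hultra x y z
  have hyw : f y w ≤ f x w + c := by
    simpa only [hsymm y x, max_eq_right hxw] using hultra y x w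
  calc f x z + f y w ≤ (f y z + c) + (f x w + c) := add_le_add hxz hyw
    _ = f x w + f y z + (c + c) := by abel

theorem four_point_of_approx_ultrametric (hsymm : ∀ x y, f x y = f y x)
    (hultra : ∀ x y z, f x z ≤ max (f x y) (f y z) + c) (x y z w : α) :
    f x z + f y w ≤ max (f x w + f y z) (f x y + f z w) + (c + c) := by
  have short_side {x y z w : α} := add_le_add_of_approx_ultrametric hsymm hultra
    (x := x) (y := y) (z := z) (w := w)
  rw [← max_add_add_right, le_max_iff]
  rcases le_total (min (f x y) (f z w)) (min (f x w) (f y z)) with h | h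
  · left
    obtain ⟨hxw, hyz⟩ := le_min_iff.mp h
    rcases le_total (f x y) (f z w) with hle | hle
    · rw [min_eq_left hle] at hxw hyz
      exact short_side hyz hxw
    · rw [min_eq_right hle] at hxw hyz
      simpa only [hsymm z x, hsymm w y, hsymm z y, hsymm w x, add_comm (f y z)] using
        short_side (hxw.trans_eq (hsymm x w)) (hyz.trans_eq (hsymm y z))
  · right
    obtain ⟨hxy, hzw⟩ := le_min_iff.mp h
    rcases le_total (f x w) (f y z) with hle | hle
    · rw [min_eq_left hle] at hxy hzw
      simpa only [hsymm w y, hsymm w z] using short_side (hzw.trans_eq (hsymm z w)) hxy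
    · rw [min_eq_right hle, hsymm y z] at hxy hzw
      simpa only [hsymm z x, hsymm y x, add_comm (f z w)] using
        short_side (hxy.trans_eq (hsymm x y)) hzw

end ApproxUltrametric

section OrderedRing

variable {R : Type*} [CommRing R] [LinearOrder R] [IsStrictOrderedRing R] {a b s t : R}

theorem le_two_mul_of_mul_le_mul (ha : 0 ≤ a) (ht : 0 ≤ t) (hab : a ≤ 2 * b) (hst : s ≤ 2 * t)
    (h : a * b ≤ t * s) : a ≤ 2 * t := by
  refine (sq_le_sq₀ ha (by positivity)).mp ?_
  calc a ^ 2 = a * a := sq a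
    _ ≤ a * (2 * b) := by gcongr
    _ = 2 * (a * b) := by ring
    _ ≤ 2 * (t * s) := by gcongr
    _ ≤ 2 * (t * (2 * t)) := by gcongr
    _ = (2 * t) ^ 2 := by ring

theorem two_mul_add_mul_add_le_nine_mul (ha : 0 ≤ a) (hb : 0 ≤ b) (hs : 0 ≤ s) (ht : 0 ≤ t)
    (hab : a ≤ 2 * b) (hba : b ≤ 2 * a) (hst : s ≤ 2 * t) (hts : t ≤ 2 * s)
    (h : a * b ≤ t * s) : 2 * ((a + t) * (s + b)) ≤ 9 * (t * s) := by
  have hat : a ≤ 2 * t := le_two_mul_of_mul_le_mul ha ht hab hst h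
  have hbs : b ≤ 2 * s :=
    le_two_mul_of_mul_le_mul hb hs hba hts (by simpa only [mul_comm] using h)
  have hprod : 0 ≤ (2 * t - a) * (2 * s - b) :=
    mul_nonneg (sub_nonneg.mpr hat) (sub_nonneg.mpr hbs)
  calc 2 * ((a + t) * (s + b)) = 6 * (t * s) + 3 * (a * b) - (2 * t - a) * (2 * s - b) := by ring
    _ ≤ 9 * (t * s) := by linarith

end OrderedRing

section DistProd

variable {X : Type*} [PseudoMetricSpace X] {F : X → ℝ}

/-- The argument of the logarithm in `jGO F x y`, multiplied by `F x * F y`. Unlike that argument,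
it satisfies an approximate ultrametric inequality when `F` is nonnegative and `1`-Lipschitz. -/
def distProd (F : X → ℝ) (x y : X) : ℝ :=
  (F x + dist x y) * (F y + dist x y)

theorem distProd_comm (F : X → ℝ) (x y : X) : distProd F x y = distProd F y x := by
  rw [distProd, distProd, dist_comm, mul_comm]

theorem distProd_pos {x y : X} (hx : 0 < F x) (hy : 0 < F y) : 0 < distProd F x y := by
  unfold distProd
  positivity

theorem distProd_le_of_distProd_le (hF : ∀ x, 0 ≤ F x) (hLip : LipschitzWith 1 F) {x y z : X}
    (h : distProd F x y ≤ distProd F y z) : distProd F x z ≤ 9 / 2 * distProd F y z := by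
  have hx := hF x
  have hy := hF y
  have hz := hF z
  have hxy : |F x - F y| ≤ dist x y := by simpa [Real.dist_eq] using hLip.dist_le_mul x y
  have hyz : |F y - F z| ≤ dist y z := by simpa [Real.dist_eq] using hLip.dist_le_mul y z
  have htri := dist_triangle x y z
  rw [abs_le] at hxy hyz
  have hbound := two_mul_add_mul_add_le_nine_mul
    (a := F x + dist x y) (b := F y + dist x y) (t := F y + dist y z) (s := F z + dist y z)
    (by positivity) (by positivity) (by positivity) (by positivity)
    (by linarith) (by linarith) (by linarith) (by linarith) h
  calc distProd F x z
      ≤ ((F x + dist x y) + (F y + dist y z)) * ((F z + dist y z) + (F y + dist x y)) := by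
        unfold distProd
        gcongr ?_ * ?_ <;> linarith
    _ ≤ 9 / 2 * distProd F y z := by
        unfold distProd
        linarith

-- `9 / 2` is sharp: take `F x = F z = d(x, y) = d(y, z) = d(x, z) / 2` and let `F y → 0`.
theorem distProd_le_max (hF : ∀ x, 0 ≤ F x) (hLip : LipschitzWith 1 F) (x y z : X) :
    distProd F x z ≤ 9 / 2 * max (distProd F x y) (distProd F y z) := by
  rcases le_total (distProd F x y) (distProd F y z) with h | h
  · simpa only [max_eq_right h] using distProd_le_of_distProd_le hF hLip h
  · rw [max_eq_left h, distProd_comm F x z, distProd_comm F x y]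
    exact distProd_le_of_distProd_le hF hLip (by simpa only [distProd_comm F] using h)

theorem log_distProd_le_max (hF : ∀ x, 0 < F x) (hLip : LipschitzWith 1 F) (x y z : X) :
    log (distProd F x z) ≤ max (log (distProd F x y)) (log (distProd F y z)) + log (9 / 2) := by
  have hpos (x y : X) : 0 < distProd F x y := distProd_pos (hF x) (hF y)
  have hmax : 0 < max (distProd F x y) (distProd F y z) := lt_max_of_lt_left (hpos x y)
  calc log (distProd F x z) ≤ log (9 / 2 * max (distProd F x y) (distProd F y z)) :=
        log_le_log (hpos x z) (distProd_le_max (fun x ↦ (hF x).le) hLip x y z)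
    _ = log (max (distProd F x y) (distProd F y z)) + log (9 / 2) := by
        rw [log_mul (by norm_num) hmax.ne', add_comm]
    _ = max (log (distProd F x y)) (log (distProd F y z)) + log (9 / 2) := by
        rw [strictMonoOn_log.monotoneOn.map_max (hpos x y) (hpos y z)]

end DistProd

section GehringOsgood

variable {X : Type*} [MetricSpace X] {F : X → ℝ}

theorem jGO_eq_half_log_distProd_sub {x y : X} (hx : 0 < F x) (hy : 0 < F y) :
    jGO F x y = (1 / 2) * (log (distProd F x y) - log (F x) - log (F y)) := by
  have hP := distProd_pos hx hy
  rw [← log_div hP.ne' hx.ne', ← log_div (by positivity) hy.ne', jGO, distProd]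
  congr 2
  field_simp

-- In the corollary below, the space `X` here is the subspace `X ∖ M` there.
theorem stmt_2_general (hF : ∀ x, 0 < F x) (hLip : LipschitzWith 1 F) (x y z w : X) :
    jGO F x z + jGO F y w ≤
      max (jGO F x w + jGO F y z) (jGO F x y + jGO F z w) + log (9 / 2) := by
  have hfour := four_point_of_approx_ultrametric
    (fun p q ↦ congrArg log (distProd_comm F p q)) (log_distProd_le_max hF hLip) x y z w
  simp only [jGO_eq_half_log_distProd_sub (hF _) (hF _)]
  rw [← max_add_add_right, le_max_iff] at hfour ⊢
  exact hfour.imp (fun h ↦ by linarith) (fun h ↦ by linarith)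

end GehringOsgood

theorem log_nine_halves_le_half_log_twentyFour : log (9 / 2) ≤ (1 / 2) * log 24 := by
  have hsq : 2 * log (9 / 2) ≤ log 24 := by
    calc 2 * log (9 / 2) = log ((9 / 2) ^ 2) := by rw [log_pow, Nat.cast_ofNat]
      _ ≤ log 24 := log_le_log (by norm_num) (by norm_num)
  linarith

theorem stmt_2 {X : Type*} [MetricSpace X] (M : Set X)
    (hMclosed : IsClosed M) (hMne : M.Nonempty) (hMproper : M ≠ Set.univ)
    (F : X → ℝ) (hFpos : ∀ x ∉ M, 0 < F x)
    (hFlip : ∀ x ∉ M, ∀ y ∉ M, |F x - F y| ≤ dist x y) :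
    ∀ x ∉ M, ∀ y ∉ M, ∀ z ∉ M, ∀ w ∉ M,
      jGO F x z + jGO F y w ≤
        max (jGO F x w + jGO F y z) (jGO F x y + jGO F z w) + (1 / 2) * Real.log 24 := by
  intro x hx y hy z hz w hw
  have hLip : LipschitzWith 1 (Mᶜ.domRestrict F) :=
    LipschitzWith.mk_one fun p q ↦ hFlip p p.2 q q.2
  exact (stmt_2_general (fun p : ↥Mᶜ ↦ hFpos p p.2) hLip ⟨x, hx⟩ ⟨y, hy⟩ ⟨z, hz⟩ ⟨w, hw⟩).trans
    (add_le_add_right log_nine_halves_le_half_log_twentyFour _)
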